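/- For every even integer n ≥ 20, every set of n distinct points in the Euclidean plane ℝ² admits an acute spanning tour, i.e., a Hamiltonian cycle drawn with straight-line edges in which every rotation angle is at most π/2. -/

import Mathlib

open EuclideanGeometry Real

/-!
Halve the points by a vertical and a horizontal line. As the frame rotates by a right angle, the
number `k` of points in the first quadrant turns into `m - k`, where `2 * m` is the number of
points, so in some frame it is `m / 2`. Opposite quadrants then have equally many points, at least
four, and any zigzag between opposite quadrants is acute; it remains to join the zigzag between the
first and the third quadrant to the one between the second and the fourth, in two places.

Given one point in each quadrant, the two diagonals can be joined by an acute path along a side of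
the quadrilateral, which is horizontal or vertical according to the sign of the inner product of
the diagonals. Among three such quadrilaterals two have parallel joining sides. If one side is
upper and the other lower, the two zigzags close up. If both are upper, the number of points left
in the quadrants is repaired by a detour from the fourth quadrant to a point of the third that is
higher than two points of the fourth, or by the mirror image of this detour.
-/

namespace AcuteTour

section TopSubset

variable {α R : Type*}

/-- `A` consists of `m` points of `S` at which `g` is largest. Ties make `A` non-unique, and all
admissible choices are needed. -/
structure IsTopSubset [LE R] (m : ℕ) (g : α → R) (S A : Finset α) : Prop where
  subset : A ⊆ S
  card_eq : A.card = m
  le : ∀ p ∈ A, ∀ q ∈ S, q ∉ A → g q ≤ g p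

theorem exists_isTopSubset [LinearOrder R] {m : ℕ} (g : α → R) {S : Finset α} (hm : m ≤ S.card) :
    ∃ A, IsTopSubset m g S A := by
  classical
  induction m with
  | zero => exact ⟨∅, by simp, by simp, by simp⟩
  | succ m ih =>
    obtain ⟨A, hA⟩ := ih (by omega)
    have hne : (S \ A).Nonempty := by
      rw [← Finset.card_pos, Finset.card_sdiff_of_subset hA.subset, hA.card_eq]
      omega
    obtain ⟨x, hx, hmax⟩ := Finset.exists_max_image (S \ A) g hne
    obtain ⟨hxS, hxA⟩ := Finset.mem_sdiff.1 hx
    refine ⟨insert x A, Finset.insert_subset hxS hA.subset, ?_, fun p hp q hqS hq => ?_⟩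
    · rw [Finset.card_insert_of_notMem hxA, hA.card_eq]
    · have hqA : q ∉ A := fun h => hq (Finset.mem_insert_of_mem h)
      rcases Finset.mem_insert.1 hp with rfl | hp
      · exact hmax q (Finset.mem_sdiff.2 ⟨hqS, hqA⟩)
      · exact hA.le p hp q hqS hqA

theorem IsTopSubset.sdiff [DecidableEq α] [AddCommGroup R] [PartialOrder R]
    [IsOrderedAddMonoid R] {m : ℕ} {g : α → R} {S A : Finset α} (hA : IsTopSubset m g S A) :
    IsTopSubset (S.card - m) (fun p => -g p) S (S \ A) where
  subset := Finset.sdiff_subset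
  card_eq := by rw [Finset.card_sdiff_of_subset hA.subset, hA.card_eq]
  le p hp q hqS hq := by
    have hqA : q ∈ A := by_contra fun h => hq (Finset.mem_sdiff.2 ⟨hqS, h⟩)
    obtain ⟨hpS, hpA⟩ := Finset.mem_sdiff.1 hp
    exact neg_le_neg (hA.le q hqA p hpS hpA)

section Preorder

variable [Preorder R] {m : ℕ} {g : α → R} {S A A' : Finset α}

theorem IsTopSubset.of_inter_subset_of_subset_union [DecidableEq α] (hA : IsTopSubset m g S A)
    (hA' : IsTopSubset m g S A') {C : Finset α} (hinter : A ∩ A' ⊆ C) (hunion : C ⊆ A ∪ A')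
    (hcard : C.card = m) : IsTopSubset m g S C where
  subset := hunion.trans (Finset.union_subset hA.subset hA'.subset)
  card_eq := hcard
  le := by
    -- Exchanging `A` for `A'` goes through a point whose value lies between the two.
    have le_of_mem_sdiff : ∀ {A A' : Finset α}, IsTopSubset m g S A → IsTopSubset m g S A' →
        ∀ p ∈ A, ∀ q ∈ S, q ∈ A → q ∉ A' → g q ≤ g p := by
      intro A A' hA hA' p hp q hqS hqA hqA'
      have hne : (A' \ A).Nonempty := by
        rw [← Finset.card_pos, Finset.card_sdiff_comm (hA'.card_eq.trans hA.card_eq.symm),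
          Finset.card_pos]
        exact ⟨q, Finset.mem_sdiff.2 ⟨hqA, hqA'⟩⟩
      obtain ⟨r, hr⟩ := hne
      obtain ⟨hrA', hrA⟩ := Finset.mem_sdiff.1 hr
      exact (hA'.le r hrA' q hqS hqA').trans (hA.le p hp r (hA'.subset hrA') hrA)
    intro p hp q hqS hq
    have hq' : q ∈ A → q ∉ A' := fun hqA hqA' => hq (hinter (Finset.mem_inter.2 ⟨hqA, hqA'⟩))
    rcases Finset.mem_union.1 (hunion hp) with hpA | hpA'
    · by_cases hqA : q ∈ A
      · exact le_of_mem_sdiff hA hA' p hpA q hqS hqA (hq' hqA)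
      · exact hA.le p hpA q hqS hqA
    · by_cases hqA' : q ∈ A'
      · exact le_of_mem_sdiff hA' hA p hpA' q hqS hqA' fun hqA => hq' hqA hqA'
      · exact hA'.le p hpA' q hqS hqA'

theorem IsTopSubset.exists_card_inter_eq [DecidableEq α] (hA : IsTopSubset m g S A)
    (hA' : IsTopSubset m g S A') {B : Finset α} {k : ℕ} (hk : (A ∩ B).card ≤ k)
    (hk' : k ≤ (A' ∩ B).card) : ∃ C, IsTopSubset m g S C ∧ (C ∩ B).card = k := by
  have hcard := Finset.card_inter_add_card_sdiff A B
  have hcard' := Finset.card_inter_add_card_sdiff A' B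
  rw [hA.card_eq] at hcard
  rw [hA'.card_eq] at hcard'
  have hle : A ∩ A' ⊆ A ∪ A' := Finset.inter_subset_left.trans Finset.subset_union_left
  obtain ⟨C₁, hinter₁, hunion₁, hC₁⟩ : ∃ C₁, (A ∩ A') ∩ B ⊆ C₁ ∧ C₁ ⊆ (A ∪ A') ∩ B ∧
      C₁.card = k :=
    Finset.exists_subsuperset_card_eq (by gcongr)
      ((Finset.card_le_card (by gcongr; exact Finset.inter_subset_left)).trans hk)
      (hk'.trans (Finset.card_le_card (by gcongr; exact Finset.subset_union_right)))
  obtain ⟨C₂, hinter₂, hunion₂, hC₂⟩ : ∃ C₂, (A ∩ A') \ B ⊆ C₂ ∧ C₂ ⊆ (A ∪ A') \ B ∧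
      C₂.card = m - k := by
    refine Finset.exists_subsuperset_card_eq (by gcongr) ?_ ?_
    · have : ((A ∩ A') \ B).card ≤ (A' \ B).card :=
        Finset.card_le_card (by gcongr; exact Finset.inter_subset_right)
      omega
    · have : (A \ B).card ≤ ((A ∪ A') \ B).card :=
        Finset.card_le_card (by gcongr; exact Finset.subset_union_left)
      omega
  have hC₁B : C₁ ⊆ B := hunion₁.trans Finset.inter_subset_right
  have hC₂B : Disjoint C₂ B := Finset.sdiff_disjoint.mono_left hunion₂
  refine ⟨C₁ ∪ C₂, hA.of_inter_subset_of_subset_union hA' ?_ ?_ ?_, ?_⟩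
  · rw [← Finset.sdiff_union_inter (A ∩ A') B, Finset.union_comm]
    exact Finset.union_subset_union hinter₁ hinter₂
  · exact Finset.union_subset (hunion₁.trans Finset.inter_subset_left)
      (hunion₂.trans Finset.sdiff_subset)
  · rw [Finset.card_union_of_disjoint (hC₂B.symm.mono_left hC₁B), hC₁, hC₂]
    omega
  · rw [Finset.union_inter_distrib_right, Finset.inter_eq_left.2 hC₁B,
      Finset.disjoint_iff_inter_eq_empty.1 hC₂B, Finset.union_empty, hC₁]

section Continuity

variable {T : Type*} [TopologicalSpace T] [TopologicalSpace R] [OrderClosedTopology R]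
  {F G : T → α → R}

theorem isClosed_setOf_isTopSubset (hF : ∀ p, Continuous (F · p)) (m : ℕ) (S A : Finset α) :
    IsClosed {t | IsTopSubset m (F t) S A} := by
  have : {t | IsTopSubset m (F t) S A} = {_t : T | A ⊆ S ∧ A.card = m} ∩
      ⋂ p ∈ A, ⋂ q ∈ S, ⋂ _ : q ∉ A, {t | F t q ≤ F t p} := by
    ext t
    simp only [Set.mem_inter_iff, Set.mem_iInter]
    exact ⟨fun h => ⟨⟨h.subset, h.card_eq⟩, h.le⟩, fun h => ⟨h.1.1, h.1.2, h.2⟩⟩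
  rw [this]
  exact isClosed_const.inter <| isClosed_biInter fun p _ => isClosed_biInter fun q _ =>
    isClosed_iInter fun _ => isClosed_le (hF q) (hF p)

theorem isClosed_setOf_exists_isTopSubset (hF : ∀ p, Continuous (F · p))
    (hG : ∀ p, Continuous (G · p)) (m : ℕ) (S : Finset α) (r : Finset α → Finset α → Prop) :
    IsClosed {t | ∃ A B, IsTopSubset m (F t) S A ∧ IsTopSubset m (G t) S B ∧ r A B} := by
  have : {t | ∃ A B, IsTopSubset m (F t) S A ∧ IsTopSubset m (G t) S B ∧ r A B} =
      ⋃ A ∈ S.powerset, ⋃ B ∈ S.powerset, {t | IsTopSubset m (F t) S A} ∩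
        ({t | IsTopSubset m (G t) S B} ∩ {_t | r A B}) := by
    ext t
    simp only [Set.mem_iUnion, Finset.mem_powerset]
    exact ⟨fun ⟨A, B, hA, hB, h⟩ => ⟨A, hA.subset, B, hB.subset, hA, hB, h⟩,
      fun ⟨A, _, B, _, hA, hB, h⟩ => ⟨A, B, hA, hB, h⟩⟩
  rw [this]
  exact isClosed_biUnion_finset fun A _ => isClosed_biUnion_finset fun B _ =>
    (isClosed_setOf_isTopSubset hF m S A).inter
      ((isClosed_setOf_isTopSubset hG m S B).inter isClosed_const)

end Continuity

end Preorder

theorem exists_isTopSubset_card_inter_eq [DecidableEq α] [LinearOrder R] [TopologicalSpace R]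
    [OrderClosedTopology R] {T : Type*} [TopologicalSpace T] [PreconnectedSpace T]
    {F G : T → α → R} {m : ℕ} {S : Finset α}
    (hF : ∀ p, Continuous (F · p)) (hG : ∀ p, Continuous (G · p)) {k : ℕ} {t₀ t₁ : T}
    {A₀ B₀ A₁ B₁ : Finset α} (hA₀ : IsTopSubset m (F t₀) S A₀) (hB₀ : IsTopSubset m (G t₀) S B₀)
    (hA₁ : IsTopSubset m (F t₁) S A₁) (hB₁ : IsTopSubset m (G t₁) S B₁)
    (h₀ : (A₀ ∩ B₀).card ≤ k) (h₁ : k ≤ (A₁ ∩ B₁).card) :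
    ∃ t A B, IsTopSubset m (F t) S A ∧ IsTopSubset m (G t) S B ∧ (A ∩ B).card = k := by
  have hm : m ≤ S.card := hA₀.card_eq ▸ Finset.card_le_card hA₀.subset
  obtain ⟨t, -, ⟨A, B, hA, hB, hle⟩, A', B', hA', hB', hge⟩ :=
    isPreconnected_closed_iff.1 isPreconnected_univ _ _
      (isClosed_setOf_exists_isTopSubset hF hG m S fun A B => (A ∩ B).card ≤ k)
      (isClosed_setOf_exists_isTopSubset hF hG m S fun A B => k ≤ (A ∩ B).card)
      (fun t _ => by
        obtain ⟨A, hA⟩ := exists_isTopSubset (F t) hm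
        obtain ⟨B, hB⟩ := exists_isTopSubset (G t) hm
        exact (le_total (A ∩ B).card k).imp (⟨A, B, hA, hB, ·⟩) (⟨A, B, hA, hB, ·⟩))
      ⟨t₀, trivial, A₀, B₀, hA₀, hB₀, h₀⟩ ⟨t₁, trivial, A₁, B₁, hA₁, hB₁, h₁⟩
  rcases le_total k (A' ∩ B).card with h | h
  · obtain ⟨C, hC, hCk⟩ := hA.exists_card_inter_eq hA' hle h
    exact ⟨t, C, B, hC, hB, hCk⟩
  · rw [Finset.inter_comm] at h hge
    obtain ⟨C, hC, hCk⟩ := hB.exists_card_inter_eq hB' h hge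
    exact ⟨t, A', C, hA', hC, Finset.inter_comm C A' ▸ hCk⟩

end TopSubset

variable {V P : Type*} [NormedAddCommGroup V] [InnerProductSpace ℝ V] [MetricSpace P]
  [NormedAddTorsor V P]

section Cartesian

/-- `X` and `Y` are Cartesian coordinates on the plane `P`, with no prescribed origin or
orientation. Only the resulting formula for inner products is recorded. -/
structure IsCartesian (X Y : P → ℝ) : Prop where
  inner_vsub_vsub : ∀ p q r : P, inner ℝ (p -ᵥ q) (r -ᵥ q) =
    (X p - X q) * (X r - X q) + (Y p - Y q) * (Y r - Y q)

variable {X Y : P → ℝ}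

theorem exists_isCartesian (hV : Module.finrank ℝ V = 2) (o : P) :
    ∃ X Y : P → ℝ, IsCartesian X Y := by
  have : FiniteDimensional ℝ V := Module.finite_of_finrank_eq_succ hV
  let b := (stdOrthonormalBasis ℝ V).reindex (finCongr hV)
  refine ⟨fun p => inner ℝ (p -ᵥ o) (b 0), fun p => inner ℝ (p -ᵥ o) (b 1), ⟨fun p q r => ?_⟩⟩
  simp only [← inner_sub_left, vsub_sub_vsub_cancel_right]
  rw [← b.sum_inner_mul_inner (p -ᵥ q), Fin.sum_univ_two, real_inner_comm (r -ᵥ q),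
    real_inner_comm (r -ᵥ q)]

theorem IsCartesian.neg_left (h : IsCartesian X Y) : IsCartesian (fun p => -X p) Y :=
  ⟨fun p q r => by rw [h.inner_vsub_vsub]; ring⟩

theorem IsCartesian.swap (h : IsCartesian X Y) : IsCartesian Y X :=
  ⟨fun p q r => by rw [h.inner_vsub_vsub]; ring⟩

theorem IsCartesian.rotate (h : IsCartesian X Y) (θ : ℝ) :
    IsCartesian (fun p => cos θ * X p + sin θ * Y p) (fun p => cos θ * Y p - sin θ * X p) :=
  ⟨fun p q r => by
    rw [h.inner_vsub_vsub]
    linear_combination -((X p - X q) * (X r - X q) + (Y p - Y q) * (Y r - Y q)) *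
      sin_sq_add_cos_sq θ⟩

theorem IsCartesian.angle_le_pi_div_two_iff (h : IsCartesian X Y) {p q r : P} :
    ∠ p q r ≤ π / 2 ↔ 0 ≤ (X p - X q) * (X r - X q) + (Y p - Y q) * (Y r - Y q) := by
  rw [← h.inner_vsub_vsub]
  refine ⟨fun hle => ?_, fun hle => ?_⟩
  · rw [← InnerProductGeometry.cos_angle_mul_norm_mul_norm]
    refine mul_nonneg (cos_nonneg_of_neg_pi_div_two_le_of_le ?_ hle) (by positivity)
    linarith [InnerProductGeometry.angle_nonneg (p -ᵥ q) (r -ᵥ q), pi_pos]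
  · exact arccos_le_pi_div_two.2 (div_nonneg hle (by positivity))

theorem IsCartesian.angle_le_pi_div_two (h : IsCartesian X Y) {p q r : P}
    (hX : 0 ≤ (X p - X q) * (X r - X q)) (hY : 0 ≤ (Y p - Y q) * (Y r - Y q)) :
    ∠ p q r ≤ π / 2 :=
  h.angle_le_pi_div_two_iff.2 (add_nonneg hX hY)

end Cartesian

section AcutePath

/-- All angles at the interior points of the polygonal path through the points of the list are at
most `π / 2`. -/
def AcutePath : List P → Prop
  | p :: q :: r :: l => ∠ p q r ≤ π / 2 ∧ AcutePath (q :: r :: l)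
  | _ => True

theorem AcutePath.append_cons_cons {x y : P} {l₂ : List P} : ∀ {l₁ : List P},
    AcutePath (l₁ ++ [x, y]) → AcutePath (x :: y :: l₂) → AcutePath (l₁ ++ x :: y :: l₂)
  | [], _, h₂ => h₂
  | [_], h₁, h₂ => ⟨h₁.1, h₂⟩
  | [_, _], h₁, h₂ => ⟨h₁.1, h₁.2.1, h₂⟩
  | _ :: q :: r :: l, h₁, h₂ => ⟨h₁.1, append_cons_cons (l₁ := q :: r :: l) h₁.2 h₂⟩

theorem AcutePath.angle_getElem_le : ∀ {l : List P}, AcutePath l → ∀ (i : ℕ)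
    (hi : i + 2 < l.length), ∠ l[i] l[i + 1] l[i + 2] ≤ π / 2
  | _ :: _ :: _ :: _, h, 0, _ => h.1
  | _ :: q :: r :: l, h, i + 1, hi =>
    angle_getElem_le (l := q :: r :: l) h.2 i (by simpa using hi)

/-- `s` can be ordered cyclically into an acute tour. The first two points are repeated at the end
of the path, so that it also turns at the first and the last point of the list. -/
def HasAcuteTour (s : Multiset P) : Prop :=
  ∃ l : List P, (l : Multiset P) = s ∧ AcutePath (l ++ l.take 2)

theorem getElem_mod_length {α : Type*} {l : List α} {k j : ℕ} (hk : k ≤ l.length)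
    (hj : j < (l ++ l.take k).length) :
    l[j % l.length]'(Nat.mod_lt _ <| by grind) = (l ++ l.take k)[j] := by
  rw [List.length_append, List.length_take, min_eq_left hk] at hj
  rw [List.getElem_append]
  split_ifs with hjl
  · simp only [Nat.mod_eq_of_lt hjl]
  · simp only [List.getElem_take, Nat.mod_eq_sub_mod (not_lt.1 hjl),
      Nat.mod_eq_of_lt (show j - l.length < l.length by omega)]

theorem exists_zmod_of_hasAcuteTour {S : Finset P} (hS : 2 ≤ S.card)
    (h : HasAcuteTour S.val) : ∃ f : ZMod S.card → P, Function.Injective f ∧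
      Set.range f = S ∧ ∀ i, ∠ (f (i - 1)) (f i) (f (i + 1)) ≤ π / 2 := by
  obtain ⟨l, hl, hacute⟩ := h
  have hlength : l.length = S.card := by rw [← Multiset.coe_card, hl, Finset.card_val]
  rw [← hlength] at hS ⊢
  have : NeZero l.length := ⟨by omega⟩
  let e : ZMod l.length ≃ Fin l.length :=
    { toFun := fun i => ⟨i.val, i.val_lt⟩
      invFun := fun j => (j : ℕ)
      left_inv := fun i => i.natCast_zmod_val
      right_inv := fun j => Fin.ext (ZMod.val_natCast_of_lt j.isLt) }
  have get_natCast : ∀ j (hj : j < (l ++ l.take 2).length),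
      l.get (e j) = (l ++ l.take 2)[j] := by
    intro j hj
    rw [← getElem_mod_length hS hj]
    simp only [e, Equiv.coe_fn_mk, ZMod.val_natCast, List.get_eq_getElem]
  refine ⟨l.get ∘ e, ?_, ?_, fun i => ?_⟩
  · have hnodup : l.Nodup := Multiset.coe_nodup.1 (hl ▸ S.nodup)
    exact hnodup.injective_get.comp e.injective
  · rw [EquivLike.range_comp, Set.range_list_get]
    ext p
    rw [Finset.mem_coe, ← Finset.mem_val, ← hl, Multiset.mem_coe, Set.mem_ofPred_eq]
  · obtain ⟨j, hj, rfl⟩ : ∃ j < l.length, i = (j : ZMod l.length) + 1 :=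
      ⟨(i - 1).val, ZMod.val_lt _, by simp⟩
    have hj' : j + 2 < (l ++ l.take 2).length := by
      rw [List.length_append, List.length_take]
      omega
    have := hacute.angle_getElem_le j hj'
    rw [← get_natCast, ← get_natCast, ← get_natCast] at this
    push_cast at this
    rw [add_sub_cancel_right, add_assoc, one_add_one_eq_two]
    exact this

end AcutePath

section Zigzag

/-- Every angle with vertex in one of `U`, `V` and both legs ending in the other is at most
`π / 2`. -/
def AcuteBetween (U V : Multiset P) : Prop :=
  (∀ p ∈ U, ∀ q ∈ V, ∀ r ∈ U, ∠ p q r ≤ π / 2) ∧ ∀ p ∈ V, ∀ q ∈ U, ∀ r ∈ V, ∠ p q r ≤ π / 2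

/-- The entries of the list lie alternately in `U` and in `V`, starting in `U`. -/
def Alternates {α : Type*} : Multiset α → Multiset α → List α → Prop
  | _, _, [] => True
  | U, V, p :: l => p ∈ U ∧ Alternates V U l

theorem AcuteBetween.symm {U V : Multiset P} (h : AcuteBetween U V) : AcuteBetween V U :=
  And.symm h

theorem AcuteBetween.acutePath : ∀ {U V : Multiset P}, AcuteBetween U V → ∀ {l : List P},
    Alternates U V l → AcutePath l
  | _, _, _, [], _ => trivial
  | _, _, _, [_], _ => trivial
  | _, _, _, [_, _], _ => trivial
  | _, _, h, p :: q :: r :: _, hl =>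
    ⟨h.1 p hl.1 q hl.2.1 r hl.2.2.1, h.symm.acutePath hl.2⟩

theorem exists_alternates {α : Type*} {U V s t : Multiset α} (hcard : s.card = t.card)
    (hs : s ⊆ U) (ht : t ⊆ V) :
    ∃ z : List α, (z : Multiset α) = s + t ∧
      ∀ l, Alternates U V l → Alternates U V (z ++ l) := by
  induction s using Multiset.induction_on generalizing t with
  | empty => exact ⟨[], by simp [Multiset.card_eq_zero.1 hcard.symm], fun l hl => hl⟩
  | cons u s ih =>
    obtain ⟨v, t, rfl, ht'⟩ := Multiset.card_eq_succ_iff.1 (hcard.symm.trans (s.card_cons u))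
    obtain ⟨hu, hs⟩ := Multiset.cons_subset.1 hs
    obtain ⟨hv, ht⟩ := Multiset.cons_subset.1 ht
    obtain ⟨z, hz, hzl⟩ := ih ht'.symm hs ht
    refine ⟨u :: v :: z, ?_, fun l hl => ⟨hu, hv, hzl l hl⟩⟩
    rw [← Multiset.cons_coe, ← Multiset.cons_coe, hz, Multiset.cons_add, Multiset.add_cons]

end Zigzag

section Quartering

/-- A vertical and a horizontal line of the coordinates `X`, `Y` separate the points into the
closed quadrants `Q₁`, …, `Q₄`, in counterclockwise order starting from the upper right one. A
point on one of the lines may be counted on either side. -/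
structure IsQuartering (X Y : P → ℝ) (Q₁ Q₂ Q₃ Q₄ : Multiset P) : Prop
    extends IsCartesian X Y where
  x_le_x : ∀ {p q}, p ∈ Q₂ ∨ p ∈ Q₃ → q ∈ Q₁ ∨ q ∈ Q₄ → X p ≤ X q
  y_le_y : ∀ {p q}, p ∈ Q₃ ∨ p ∈ Q₄ → q ∈ Q₁ ∨ q ∈ Q₂ → Y p ≤ Y q

variable {X Y : P → ℝ} {Q₁ Q₂ Q₃ Q₄ : Multiset P}

theorem IsQuartering.neg_left (h : IsQuartering X Y Q₁ Q₂ Q₃ Q₄) :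
    IsQuartering (fun p => -X p) Y Q₂ Q₁ Q₄ Q₃ where
  toIsCartesian := h.toIsCartesian.neg_left
  x_le_x hp hq := neg_le_neg (h.x_le_x hq hp)
  y_le_y hp hq := h.y_le_y hp.symm hq.symm

theorem IsQuartering.swap (h : IsQuartering X Y Q₁ Q₂ Q₃ Q₄) : IsQuartering Y X Q₁ Q₄ Q₃ Q₂ where
  toIsCartesian := h.toIsCartesian.swap
  x_le_x hp hq := h.y_le_y hp.symm hq
  y_le_y hp hq := h.x_le_x hp.symm hq

theorem IsQuartering.neg_right (h : IsQuartering X Y Q₁ Q₂ Q₃ Q₄) :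
    IsQuartering X (fun p => -Y p) Q₄ Q₃ Q₂ Q₁ :=
  h.swap.neg_left.swap

theorem IsQuartering.acuteBetween₁₃ (h : IsQuartering X Y Q₁ Q₂ Q₃ Q₄) : AcuteBetween Q₁ Q₃ := by
  refine ⟨fun p hp q hq r hr => ?_, fun p hp q hq r hr => ?_⟩
  · exact h.angle_le_pi_div_two
      (mul_nonneg (sub_nonneg.2 (h.x_le_x (.inr hq) (.inl hp)))
        (sub_nonneg.2 (h.x_le_x (.inr hq) (.inl hr))))
      (mul_nonneg (sub_nonneg.2 (h.y_le_y (.inl hq) (.inl hp)))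
        (sub_nonneg.2 (h.y_le_y (.inl hq) (.inl hr))))
  · exact h.angle_le_pi_div_two
      (mul_nonneg_of_nonpos_of_nonpos (sub_nonpos.2 (h.x_le_x (.inr hp) (.inl hq)))
        (sub_nonpos.2 (h.x_le_x (.inr hr) (.inl hq))))
      (mul_nonneg_of_nonpos_of_nonpos (sub_nonpos.2 (h.y_le_y (.inl hp) (.inl hq)))
        (sub_nonpos.2 (h.y_le_y (.inl hr) (.inl hq))))

theorem IsQuartering.acuteBetween₂₄ (h : IsQuartering X Y Q₁ Q₂ Q₃ Q₄) : AcuteBetween Q₂ Q₄ :=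
  h.neg_left.acuteBetween₁₃

/-- An acute path along the side `ab` or the side `cd` joins the diagonals `ac` and `bd` of the
quadrilateral `abcd`. -/
def DiagonalsJoined (a b c d : P) : Prop :=
  AcutePath [c, a, b, d] ∨ AcutePath [b, d, c, a]

theorem AcutePath.reverse_four {p q r s : P} (h : AcutePath [p, q, r, s]) :
    AcutePath [s, r, q, p] :=
  ⟨angle_comm q r s ▸ h.2.1, angle_comm p q r ▸ h.1, trivial⟩

theorem DiagonalsJoined.flip {a b c d : P} (h : DiagonalsJoined a b c d) :
    DiagonalsJoined b a d c :=
  h.imp AcutePath.reverse_four AcutePath.reverse_four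

theorem IsQuartering.diagonalsJoined_of_inner_nonpos_of_le (h : IsQuartering X Y Q₁ Q₂ Q₃ Q₄)
    {a b c d : P} (ha : a ∈ Q₁) (hb : b ∈ Q₂) (hc : c ∈ Q₃) (hd : d ∈ Q₄)
    (hdiag : (X a - X c) * (X b - X d) + (Y a - Y c) * (Y b - Y d) ≤ 0) (hab : Y a ≤ Y b) :
    DiagonalsJoined a b c d := by
  have hXac : 0 ≤ X a - X c := sub_nonneg.2 (h.x_le_x (.inr hc) (.inl ha))
  have hYac : 0 ≤ Y a - Y c := sub_nonneg.2 (h.y_le_y (.inl hc) (.inl ha))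
  have hXbd : X b - X d ≤ 0 := sub_nonpos.2 (h.x_le_x (.inl hb) (.inr hd))
  have hXba : X b - X a ≤ 0 := sub_nonpos.2 (h.x_le_x (.inl hb) (.inl ha))
  have hYbd : 0 ≤ Y b - Y d := sub_nonneg.2 (h.y_le_y (.inr hd) (.inr hb))
  have hYad : 0 ≤ Y a - Y d := sub_nonneg.2 (h.y_le_y (.inr hd) (.inl ha))
  rcases le_or_gt 0 ((X c - X a) * (X b - X a) + (Y c - Y a) * (Y b - Y a)) with hcab | hcab
  · refine .inl ⟨h.angle_le_pi_div_two_iff.2 hcab, h.angle_le_pi_div_two ?_ ?_, trivial⟩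
    · exact mul_nonneg (by linarith) (by linarith)
    · exact mul_nonneg_of_nonpos_of_nonpos (by linarith) (by linarith)
  · have hXad : X a ≤ X d := by
      have : (X a - X c) * (X a - X b) < (X a - X c) * (X d - X b) :=
        calc (X a - X c) * (X a - X b) < (Y a - Y c) * (Y b - Y a) := by linarith
          _ ≤ (Y a - Y c) * (Y b - Y d) := by gcongr; linarith
          _ ≤ (X a - X c) * (X d - X b) := by linarith
      linarith [lt_of_mul_lt_mul_left this hXac]
    refine .inr ⟨h.angle_le_pi_div_two_iff.2 ?_, h.angle_le_pi_div_two_iff.2 ?_, trivial⟩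
    · calc 0 ≤ -((X a - X c) * (X b - X d) + (Y a - Y c) * (Y b - Y d)) +
            ((X d - X b) * (X d - X a) + (Y b - Y d) * (Y a - Y d)) :=
            add_nonneg (neg_nonneg.2 hdiag) (add_nonneg
              (mul_nonneg (by linarith) (by linarith)) (mul_nonneg hYbd hYad))
        _ = _ := by ring
    · calc 0 ≤ -((X a - X c) * (X b - X d) + (Y a - Y c) * (Y b - Y d)) -
            ((X c - X a) * (X b - X a) + (Y c - Y a) * (Y b - Y a)) +
            ((X a - X c) ^ 2 + (Y a - Y c) ^ 2) := by
            have : 0 ≤ (X a - X c) ^ 2 + (Y a - Y c) ^ 2 := by positivity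
            linarith
        _ = _ := by ring

theorem IsQuartering.diagonalsJoined_of_inner_nonpos (h : IsQuartering X Y Q₁ Q₂ Q₃ Q₄)
    {a b c d : P} (ha : a ∈ Q₁) (hb : b ∈ Q₂) (hc : c ∈ Q₃) (hd : d ∈ Q₄)
    (hdiag : (X a - X c) * (X b - X d) + (Y a - Y c) * (Y b - Y d) ≤ 0) :
    DiagonalsJoined a b c d := by
  rcases le_total (Y a) (Y b) with hab | hba
  · exact h.diagonalsJoined_of_inner_nonpos_of_le ha hb hc hd hdiag hab
  · exact (h.neg_left.diagonalsJoined_of_inner_nonpos_of_le hb ha hd hc (by linarith) hba).flip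

theorem IsQuartering.diagonalsJoined_or (h : IsQuartering X Y Q₁ Q₂ Q₃ Q₄)
    {a b c d : P} (ha : a ∈ Q₁) (hb : b ∈ Q₂) (hc : c ∈ Q₃) (hd : d ∈ Q₄) :
    DiagonalsJoined a b c d ∨ DiagonalsJoined a d c b := by
  rcases le_total ((X a - X c) * (X b - X d) + (Y a - Y c) * (Y b - Y d)) 0 with hdiag | hdiag
  · exact .inl (h.diagonalsJoined_of_inner_nonpos ha hb hc hd hdiag)
  · exact .inr (h.swap.diagonalsJoined_of_inner_nonpos ha hd hc hb (by linarith))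

end Quartering

section Tours

theorem exists_eq_cons_cons {α : Type*} {s : Multiset α} (hs : 2 ≤ s.card) :
    ∃ a b t, s = a ::ₘ b ::ₘ t := by
  obtain ⟨n, hn⟩ := Nat.exists_eq_add_of_le' hs
  obtain ⟨a, t, rfl, ht⟩ := Multiset.card_eq_succ_iff.1 hn
  obtain ⟨b, u, rfl, -⟩ := Multiset.card_eq_succ_iff.1 ht
  exact ⟨a, b, u, rfl⟩

theorem exists_eq_cons_cons_cons {α : Type*} {s : Multiset α} (hs : 3 ≤ s.card) :
    ∃ a b c t, s = a ::ₘ b ::ₘ c ::ₘ t := by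
  obtain ⟨n, hn⟩ := Nat.exists_eq_add_of_le' hs
  obtain ⟨a, t, rfl, ht⟩ := Multiset.card_eq_succ_iff.1 hn
  obtain ⟨b, c, u, rfl⟩ := exists_eq_cons_cons (ht ▸ Nat.le_add_left 2 n)
  exact ⟨a, b, c, u, rfl⟩

theorem AcuteBetween.exists_zigzag {U V s t : Multiset P} (h : AcuteBetween U V)
    (hcard : s.card = t.card) (hs : s ⊆ U) (ht : t ⊆ V) :
    ∃ z : List P, (z : Multiset P) = s + t ∧
      ∀ {x y x' y' : P} {l₁ l₂ : List P}, x ∈ U → y ∈ V → x' ∈ U → y' ∈ V →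
        AcutePath (l₁ ++ [x, y]) → AcutePath (x' :: y' :: l₂) →
        AcutePath (l₁ ++ x :: y :: (z ++ x' :: y' :: l₂)) := by
  obtain ⟨z, hz, hzl⟩ := exists_alternates hcard hs ht
  refine ⟨z, hz, fun hx hy hx' hy' h₁ h₂ => h₁.append_cons_cons ?_⟩
  rw [← List.cons_append, ← List.cons_append]
  refine AcutePath.append_cons_cons (h.acutePath ?_) h₂
  exact ⟨hx, hy, hzl _ ⟨hx', hy', trivial⟩⟩

theorem hasAcuteTour_of_opposite_joins {a a' b b' c c' d d' : P} {r₁ r₂ r₃ r₄ : Multiset P}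
    (h₁₃ : AcuteBetween (a ::ₘ a' ::ₘ r₁) (c ::ₘ c' ::ₘ r₃))
    (h₂₄ : AcuteBetween (b ::ₘ b' ::ₘ r₂) (d ::ₘ d' ::ₘ r₄))
    (hr₁₃ : r₁.card = r₃.card) (hr₂₄ : r₂.card = r₄.card)
    (hab : AcutePath [c, a, b, d]) (hcd : AcutePath [b', d', c', a']) :
    HasAcuteTour (a ::ₘ a' ::ₘ r₁ + b ::ₘ b' ::ₘ r₂ + c ::ₘ c' ::ₘ r₃ + d ::ₘ d' ::ₘ r₄) := by
  obtain ⟨z₃₁, hz₃₁, zigzag₃₁⟩ := h₁₃.symm.exists_zigzag (s := r₃) (t := r₁) hr₁₃.symm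
    (fun _ => by simp +contextual) (fun _ => by simp +contextual)
  obtain ⟨z₂₄, hz₂₄, zigzag₂₄⟩ := h₂₄.exists_zigzag (s := r₂) (t := r₄) hr₂₄
    (fun _ => by simp +contextual) (fun _ => by simp +contextual)
  refine ⟨c :: a :: b :: d :: (z₂₄ ++ b' :: d' :: c' :: a' :: z₃₁), ?_, ?_⟩
  · simp only [← Multiset.cons_coe, ← Multiset.coe_add, hz₂₄, hz₃₁, ← Multiset.singleton_add]
    abel
  · have hclose : AcutePath ([b', d'] ++ c' :: a' :: (z₃₁ ++ [c, a])) :=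
      zigzag₃₁ (by simp) (by simp) (by simp) (by simp) hcd trivial
    simpa using zigzag₂₄ (l₁ := [c, a]) (by simp) (by simp) (by simp) (by simp) hab hclose

theorem IsQuartering.acutePath_detour {X Y : P → ℝ} {Q₁ Q₂ Q₃ Q₄ : Multiset P}
    (h : IsQuartering X Y Q₁ Q₂ Q₃ Q₄) {β₁ β₂ γ δ₁ δ₂ : P} (hβ₁ : β₁ ∈ Q₂) (hβ₂ : β₂ ∈ Q₂)
    (hγ : γ ∈ Q₃) (hδ₁ : δ₁ ∈ Q₄) (hδ₂ : δ₂ ∈ Q₄) (hY₁ : Y δ₁ ≤ Y γ) (hY₂ : Y δ₂ ≤ Y γ) :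
    AcutePath [β₁, δ₁, γ, δ₂, β₂] := by
  have hX₁ : X γ ≤ X δ₁ := h.x_le_x (.inr hγ) (.inr hδ₁)
  have hX₂ : X γ ≤ X δ₂ := h.x_le_x (.inr hγ) (.inr hδ₂)
  refine ⟨h.angle_le_pi_div_two ?_ ?_, h.angle_le_pi_div_two ?_ ?_,
    h.angle_le_pi_div_two ?_ ?_, trivial⟩
  · exact mul_nonneg_of_nonpos_of_nonpos
      (sub_nonpos.2 (h.x_le_x (.inl hβ₁) (.inr hδ₁))) (sub_nonpos.2 hX₁)
  · exact mul_nonneg (sub_nonneg.2 (h.y_le_y (.inr hδ₁) (.inr hβ₁))) (sub_nonneg.2 hY₁)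
  · exact mul_nonneg (sub_nonneg.2 hX₁) (sub_nonneg.2 hX₂)
  · exact mul_nonneg_of_nonpos_of_nonpos (sub_nonpos.2 hY₁) (sub_nonpos.2 hY₂)
  · exact mul_nonneg_of_nonpos_of_nonpos (sub_nonpos.2 hX₂)
      (sub_nonpos.2 (h.x_le_x (.inl hβ₂) (.inr hδ₂)))
  · exact mul_nonneg (sub_nonneg.2 hY₂) (sub_nonneg.2 (h.y_le_y (.inr hδ₂) (.inr hβ₂)))

theorem IsQuartering.hasAcuteTour_of_detour {X Y : P → ℝ} {a a' α b b' β₁ β₂ c c' γ d d' δ₁ δ₂ : P}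
    {r₁ r₂ r₃ r₄ : Multiset P}
    (h : IsQuartering X Y (a ::ₘ a' ::ₘ α ::ₘ r₁) (b ::ₘ b' ::ₘ β₁ ::ₘ β₂ ::ₘ r₂)
      (c ::ₘ c' ::ₘ γ ::ₘ r₃) (d ::ₘ d' ::ₘ δ₁ ::ₘ δ₂ ::ₘ r₄))
    (hr₁₃ : r₁.card = r₃.card) (hr₂₄ : r₂.card = r₄.card)
    (hab : AcutePath [c, a, b, d]) (hab' : AcutePath [c', a', b', d'])
    (hδ₁ : Y δ₁ ≤ Y γ) (hδ₂ : Y δ₂ ≤ Y γ) :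
    HasAcuteTour (a ::ₘ a' ::ₘ α ::ₘ r₁ + b ::ₘ b' ::ₘ β₁ ::ₘ β₂ ::ₘ r₂ +
      c ::ₘ c' ::ₘ γ ::ₘ r₃ + d ::ₘ d' ::ₘ δ₁ ::ₘ δ₂ ::ₘ r₄) := by
  obtain ⟨z₁₃, hz₁₃, zigzag₁₃⟩ := h.acuteBetween₁₃.exists_zigzag (s := r₁) (t := r₃) hr₁₃
    (fun _ => by simp +contextual) (fun _ => by simp +contextual)
  obtain ⟨z₂₄, hz₂₄, zigzag₂₄⟩ := h.acuteBetween₂₄.exists_zigzag (s := r₂) (t := r₄) hr₂₄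
    (fun _ => by simp +contextual) (fun _ => by simp +contextual)
  refine ⟨c :: a :: b :: d :: (z₂₄ ++ β₁ :: δ₁ :: γ :: δ₂ :: β₂ :: d' :: b' :: a' :: c' ::
    (z₁₃ ++ [α])), ?_, ?_⟩
  · simp only [← Multiset.cons_coe, ← Multiset.coe_add, hz₂₄, hz₁₃, ← Multiset.singleton_add,
      Multiset.coe_nil]
    abel
  · have hclose : AcutePath ([d', b'] ++ a' :: c' :: (z₁₃ ++ [α, c, a])) :=
      zigzag₁₃ (by simp) (by simp) (by simp) (by simp) hab'.reverse_four
        (h.acuteBetween₁₃.acutePath (by simp [Alternates]))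
    have hreturn : AcutePath [δ₂, β₂, d', b'] :=
      h.acuteBetween₂₄.symm.acutePath (by simp [Alternates])
    have hdetour := (h.acutePath_detour (β₁ := β₁) (β₂ := β₂) (by simp) (by simp) (by simp)
      (by simp) (by simp) hδ₁ hδ₂).append_cons_cons (l₁ := [β₁, δ₁, γ])
      (hreturn.append_cons_cons (l₁ := [δ₂, β₂]) hclose)
    simpa using zigzag₂₄ (l₁ := [c, a]) (by simp) (by simp) (by simp) (by simp) hab hdetour

theorem IsQuartering.hasAcuteTour_of_upper_joins {X Y : P → ℝ}
    {a₁ a₂ a₃ a₄ b₁ b₂ b₃ b₄ c₁ c₂ c₃ c₄ d₁ d₂ d₃ d₄ : P} {r₁ r₂ r₃ r₄ : Multiset P}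
    (h : IsQuartering X Y (a₁ ::ₘ a₂ ::ₘ a₃ ::ₘ a₄ ::ₘ r₁) (b₁ ::ₘ b₂ ::ₘ b₃ ::ₘ b₄ ::ₘ r₂)
      (c₁ ::ₘ c₂ ::ₘ c₃ ::ₘ c₄ ::ₘ r₃) (d₁ ::ₘ d₂ ::ₘ d₃ ::ₘ d₄ ::ₘ r₄))
    (hr₁₃ : r₁.card = r₃.card) (hr₂₄ : r₂.card = r₄.card)
    (h₁ : AcutePath [c₁, a₁, b₁, d₁]) (h₂ : AcutePath [c₂, a₂, b₂, d₂]) :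
    HasAcuteTour (a₁ ::ₘ a₂ ::ₘ a₃ ::ₘ a₄ ::ₘ r₁ + b₁ ::ₘ b₂ ::ₘ b₃ ::ₘ b₄ ::ₘ r₂ +
      c₁ ::ₘ c₂ ::ₘ c₃ ::ₘ c₄ ::ₘ r₃ + d₁ ::ₘ d₂ ::ₘ d₃ ::ₘ d₄ ::ₘ r₄) := by
  wlog hc : Y c₄ ≤ Y c₃ generalizing c₃ c₄
  · rw [Multiset.cons_swap c₃ c₄] at h ⊢
    exact this h (not_le.1 hc).le
  wlog hd : Y d₄ ≤ Y d₃ generalizing d₃ d₄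
  · rw [Multiset.cons_swap d₃ d₄] at h ⊢
    exact this h (not_le.1 hd).le
  rcases le_total (Y d₃) (Y c₃) with hdc | hcd
  · exact h.hasAcuteTour_of_detour (r₁ := a₄ ::ₘ r₁) (r₃ := c₄ ::ₘ r₃) (by simp [hr₁₃]) hr₂₄
      h₁ h₂ hdc (hd.trans hdc)
  · have := h.neg_left.hasAcuteTour_of_detour (r₁ := b₄ ::ₘ r₂) (r₃ := d₄ ::ₘ r₄)
      (by simp [hr₂₄]) hr₁₃ h₁.reverse_four h₂.reverse_four hcd (hc.trans hcd)
    convert this using 1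
    abel

theorem IsQuartering.hasAcuteTour_of_diagonalsJoined {X Y : P → ℝ}
    {a a' b b' c c' d d' : P} {s₁ s₂ s₃ s₄ : Multiset P}
    (h : IsQuartering X Y (a ::ₘ a' ::ₘ s₁) (b ::ₘ b' ::ₘ s₂) (c ::ₘ c' ::ₘ s₃) (d ::ₘ d' ::ₘ s₄))
    (hs₁₃ : s₁.card = s₃.card) (hs₂₄ : s₂.card = s₄.card) (hs₁ : 2 ≤ s₁.card) (hs₂ : 2 ≤ s₂.card)
    (h₁ : DiagonalsJoined a b c d) (h₂ : DiagonalsJoined a' b' c' d') :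
    HasAcuteTour (a ::ₘ a' ::ₘ s₁ + b ::ₘ b' ::ₘ s₂ + c ::ₘ c' ::ₘ s₃ + d ::ₘ d' ::ₘ s₄) := by
  have of_reversed_sum : ∀ {s t u v : Multiset P}, HasAcuteTour (v + u + t + s) →
      HasAcuteTour (s + t + u + v) := fun {s t u v} h => by
    convert h using 1
    abel
  obtain ⟨a₃, a₄, r₁, rfl⟩ := exists_eq_cons_cons hs₁
  obtain ⟨b₃, b₄, r₂, rfl⟩ := exists_eq_cons_cons hs₂
  obtain ⟨c₃, c₄, r₃, rfl⟩ := exists_eq_cons_cons (hs₁₃ ▸ hs₁)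
  obtain ⟨d₃, d₄, r₄, rfl⟩ := exists_eq_cons_cons (hs₂₄ ▸ hs₂)
  have hr₁₃ : r₁.card = r₃.card := by simpa using hs₁₃
  have hr₂₄ : r₂.card = r₄.card := by simpa using hs₂₄
  rcases h₁ with hab | hcd <;> rcases h₂ with hab' | hcd'
  · exact h.hasAcuteTour_of_upper_joins hr₁₃ hr₂₄ hab hab'
  · exact hasAcuteTour_of_opposite_joins h.acuteBetween₁₃ h.acuteBetween₂₄ hs₁₃ hs₂₄ hab hcd'
  · exact of_reversed_sum <| hasAcuteTour_of_opposite_joins h.neg_right.acuteBetween₁₃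
      h.neg_right.acuteBetween₂₄ hs₂₄.symm hs₁₃.symm hcd hab'
  · exact of_reversed_sum <| h.neg_right.hasAcuteTour_of_upper_joins hr₂₄.symm hr₁₃.symm hcd hcd'

theorem IsQuartering.hasAcuteTour_of_parallel_joins {X Y : P → ℝ}
    {a a' b b' c c' d d' : P} {s₁ s₂ s₃ s₄ : Multiset P}
    (h : IsQuartering X Y (a ::ₘ a' ::ₘ s₁) (b ::ₘ b' ::ₘ s₂) (c ::ₘ c' ::ₘ s₃) (d ::ₘ d' ::ₘ s₄))
    (hs₁₃ : s₁.card = s₃.card) (hs₂₄ : s₂.card = s₄.card) (hs₁ : 2 ≤ s₁.card) (hs₂ : 2 ≤ s₂.card)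
    (hjoin : (DiagonalsJoined a b c d ∧ DiagonalsJoined a' b' c' d') ∨
      (DiagonalsJoined a d c b ∧ DiagonalsJoined a' d' c' b')) :
    HasAcuteTour (a ::ₘ a' ::ₘ s₁ + b ::ₘ b' ::ₘ s₂ + c ::ₘ c' ::ₘ s₃ + d ::ₘ d' ::ₘ s₄) := by
  rcases hjoin with ⟨h₁, h₂⟩ | ⟨h₁, h₂⟩
  · exact h.hasAcuteTour_of_diagonalsJoined hs₁₃ hs₂₄ hs₁ hs₂ h₁ h₂
  · convert h.swap.hasAcuteTour_of_diagonalsJoined hs₁₃ hs₂₄.symm hs₁ (hs₂₄ ▸ hs₂) h₁ h₂ using 1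
    abel

theorem IsQuartering.hasAcuteTour {X Y : P → ℝ} {Q₁ Q₂ Q₃ Q₄ : Multiset P}
    (h : IsQuartering X Y Q₁ Q₂ Q₃ Q₄) (h₁₃ : Q₁.card = Q₃.card) (h₂₄ : Q₂.card = Q₄.card)
    (hQ₁ : 4 ≤ Q₁.card) (hQ₂ : 4 ≤ Q₂.card) : HasAcuteTour (Q₁ + Q₂ + Q₃ + Q₄) := by
  obtain ⟨a₁, a₂, a₃, s₁, rfl⟩ := exists_eq_cons_cons_cons (Nat.le_of_succ_le hQ₁)
  obtain ⟨b₁, b₂, b₃, s₂, rfl⟩ := exists_eq_cons_cons_cons (Nat.le_of_succ_le hQ₂)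
  obtain ⟨c₁, c₂, c₃, s₃, rfl⟩ := exists_eq_cons_cons_cons (Nat.le_of_succ_le (h₁₃ ▸ hQ₁))
  obtain ⟨d₁, d₂, d₃, s₄, rfl⟩ := exists_eq_cons_cons_cons (Nat.le_of_succ_le (h₂₄ ▸ hQ₂))
  have join₁ := h.diagonalsJoined_or (a := a₁) (b := b₁) (c := c₁) (d := d₁)
    (by simp) (by simp) (by simp) (by simp)
  have join₂ := h.diagonalsJoined_or (a := a₂) (b := b₂) (c := c₂) (d := d₂)
    (by simp) (by simp) (by simp) (by simp)
  have join₃ := h.diagonalsJoined_or (a := a₃) (b := b₃) (c := c₃) (d := d₃)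
    (by simp) (by simp) (by simp) (by simp)
  simp only [Multiset.card_cons, Nat.add_right_cancel_iff] at h₁₃ h₂₄ hQ₁ hQ₂
  have hs₁ : 1 ≤ s₁.card := by omega
  have hs₂ : 1 ≤ s₂.card := by omega
  have parallel : ∀ {H₁ H₂ H₃ V₁ V₂ V₃ : Prop}, H₁ ∨ V₁ → H₂ ∨ V₂ → H₃ ∨ V₃ →
      (H₁ ∧ H₂ ∨ V₁ ∧ V₂) ∨ (H₁ ∧ H₃ ∨ V₁ ∧ V₃) ∨ (H₂ ∧ H₃ ∨ V₂ ∧ V₃) := by tauto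
  rcases parallel join₁ join₂ join₃ with hjoin | hjoin | hjoin
  · exact h.hasAcuteTour_of_parallel_joins (by simp [h₁₃]) (by simp [h₂₄])
      (by simpa using hs₁) (by simpa using hs₂) hjoin
  · rw [Multiset.cons_swap a₂ a₃, Multiset.cons_swap b₂ b₃, Multiset.cons_swap c₂ c₃,
      Multiset.cons_swap d₂ d₃] at h ⊢
    exact h.hasAcuteTour_of_parallel_joins (by simp [h₁₃]) (by simp [h₂₄])
      (by simpa using hs₁) (by simpa using hs₂) hjoin
  · rw [Multiset.cons_swap a₁ a₂, Multiset.cons_swap b₁ b₂, Multiset.cons_swap c₁ c₂,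
      Multiset.cons_swap d₁ d₂, Multiset.cons_swap a₁ a₃, Multiset.cons_swap b₁ b₃,
      Multiset.cons_swap c₁ c₃, Multiset.cons_swap d₁ d₃] at h ⊢
    exact h.hasAcuteTour_of_parallel_joins (by simp [h₁₃]) (by simp [h₂₄])
      (by simpa using hs₁) (by simpa using hs₂) hjoin

end Tours

section Partition

variable {X Y : P → ℝ} {S A B : Finset P} {m : ℕ}

theorem IsCartesian.isQuartering [DecidableEq P] {m' : ℕ} (h : IsCartesian X Y)
    (hA : IsTopSubset m X S A) (hB : IsTopSubset m' Y S B) :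
    IsQuartering X Y (A ∩ B).val (B \ A).val (S \ (A ∪ B)).val (A \ B).val where
  toIsCartesian := h
  x_le_x hp hq := by
    simp only [Finset.mem_val, Finset.mem_inter, Finset.mem_sdiff, Finset.mem_union] at hp hq
    have hBS := @hB.subset
    exact hA.le _ (by tauto) _ (by tauto) (by tauto)
  y_le_y hp hq := by
    simp only [Finset.mem_val, Finset.mem_inter, Finset.mem_sdiff, Finset.mem_union] at hp hq
    have hAS := @hA.subset
    exact hB.le _ (by tauto) _ (by tauto) (by tauto)

theorem inter_add_sdiff_add_sdiff_union_add_sdiff {α : Type*} [DecidableEq α] {S A B : Finset α}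
    (hA : A ⊆ S) (hB : B ⊆ S) :
    (A ∩ B).val + (B \ A).val + (S \ (A ∪ B)).val + (A \ B).val = S.val := by
  ext p
  have hpA := @hA p
  have hpB := @hB p
  simp only [Multiset.count_add, Multiset.count_eq_of_nodup (Finset.nodup _), Finset.mem_val,
    Finset.mem_inter, Finset.mem_sdiff, Finset.mem_union]
  by_cases p ∈ A <;> by_cases p ∈ B <;> by_cases p ∈ S <;> simp_all

theorem IsCartesian.exists_card_inter_eq_half [DecidableEq P] (h : IsCartesian X Y)
    (hcard : S.card = 2 * m) :
    ∃ (X' Y' : P → ℝ) (A B : Finset P), IsCartesian X' Y' ∧ IsTopSubset m X' S A ∧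
      IsTopSubset m Y' S B ∧ (A ∩ B).card = m / 2 := by
  let F : ℝ → P → ℝ := fun θ p => cos θ * X p + sin θ * Y p
  let G : ℝ → P → ℝ := fun θ p => cos θ * Y p - sin θ * X p
  have hF : ∀ p, Continuous (F · p) := fun p => by fun_prop
  have hG : ∀ p, Continuous (G · p) := fun p => by fun_prop
  obtain ⟨A, hA⟩ := exists_isTopSubset (m := m) X (S := S) (by omega)
  obtain ⟨B, hB⟩ := exists_isTopSubset (m := m) Y (S := S) (by omega)
  have hF₀ : IsTopSubset m (F 0) S A := by simpa [F] using hA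
  have hG₀ : IsTopSubset m (G 0) S B := by simpa [G] using hB
  have hF₁ : IsTopSubset m (F (π / 2)) S B := by simpa [F] using hB
  have hG₁ : IsTopSubset m (G (π / 2)) S (S \ A) := by
    have : S.card - m = m := by omega
    simpa [G, this] using hA.sdiff
  have hsum : (A ∩ B).card + (B ∩ (S \ A)).card = m := by
    rw [← Finset.inter_sdiff_assoc, Finset.inter_eq_left.2 hB.subset, Finset.inter_comm,
      Finset.card_inter_add_card_sdiff, hB.card_eq]
  obtain ⟨θ, A', B', hA', hB', hcard'⟩ : ∃ θ A' B', IsTopSubset m (F θ) S A' ∧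
      IsTopSubset m (G θ) S B' ∧ (A' ∩ B').card = m / 2 := by
    rcases le_or_gt (A ∩ B).card (m / 2) with hle | hgt
    · exact exists_isTopSubset_card_inter_eq hF hG hF₀ hG₀ hF₁ hG₁ hle (by omega)
    · exact exists_isTopSubset_card_inter_eq hF hG hF₁ hG₁ hF₀ hG₀ (by omega) hgt.le
  exact ⟨F θ, G θ, A', B', h.rotate θ, hA', hB', hcard'⟩

theorem hasAcuteTour_of_card_eq_two_mul (hV : Module.finrank ℝ V = 2) (hcard : S.card = 2 * m)
    (hm : 8 ≤ m) : HasAcuteTour S.val := by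
  classical
  obtain ⟨o, -⟩ := Finset.card_pos.1 (show 0 < S.card by omega)
  obtain ⟨X₀, Y₀, h₀⟩ := exists_isCartesian hV o
  obtain ⟨X, Y, A, B, h, hA, hB, hAB⟩ := h₀.exists_card_inter_eq_half hcard
  have hA_card := Finset.card_inter_add_card_sdiff A B
  have hB_card := Finset.card_inter_add_card_sdiff B A
  have hunion_card := Finset.card_union_add_card_inter A B
  have hcompl_card := Finset.card_sdiff_add_card_eq_card (Finset.union_subset hA.subset hB.subset)
  rw [hA.card_eq] at hA_card
  rw [hB.card_eq, Finset.inter_comm] at hB_card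
  rw [hA.card_eq, hB.card_eq] at hunion_card
  rw [← inter_add_sdiff_add_sdiff_union_add_sdiff hA.subset hB.subset]
  refine (h.isQuartering hA hB).hasAcuteTour ?_ ?_ ?_ ?_ <;> simp only [Finset.card_val] <;> omega

end Partition

end AcuteTour

theorem acute_spanning_tour_of_even_ge_twenty_general {V P : Type*} [NormedAddCommGroup V]
    [InnerProductSpace ℝ V] [MetricSpace P] [NormedAddTorsor V P] (hV : Module.finrank ℝ V = 2)
    (n : ℕ) (hn : 16 ≤ n) (heven : Even n) (S : Finset P) (hcard : S.card = n) :
    ∃ f : ZMod n → P, Function.Injective f ∧ Set.range f = ↑S ∧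
      ∀ i : ZMod n, ∠ (f (i - 1)) (f i) (f (i + 1)) ≤ π / 2 := by
  subst hcard
  obtain ⟨m, hm⟩ := heven.two_dvd
  exact AcuteTour.exists_zmod_of_hasAcuteTour (by omega)
    (AcuteTour.hasAcuteTour_of_card_eq_two_mul hV hm (by omega))

/-- **Acute spanning tours** (Fekete–Woeginger conjecture): for every even `n ≥ 20`,
every set of `n` points in the plane admits a spanning tour (Hamiltonian cycle,
encoded as an injective map from `ZMod n` onto the point set) all of whose
rotation angles are at most `π/2`. -/
theorem acute_spanning_tour_of_even_ge_twenty
    (n : ℕ) (hn : 20 ≤ n) (heven : Even n)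
    (S : Finset (EuclideanSpace ℝ (Fin 2))) (hcard : S.card = n) :
    ∃ f : ZMod n → EuclideanSpace ℝ (Fin 2),
      Function.Injective f ∧ Set.range f = ↑S ∧
      ∀ i : ZMod n,
        EuclideanGeometry.angle (f (i - 1)) (f i) (f (i + 1)) ≤ π / 2 :=
  acute_spanning_tour_of_even_ge_twenty_general
    finrank_euclideanSpace_fin n (by omega) heven S hcard
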